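/- Let d ≥ 1 and let η be the Minkowski form on ℝ^{1+d} (η = diag(−1, 1, …, 1), coordinates (t, x¹, …, x^d)), so that □_η φ = −∂_t² φ + Δ_x φ. Let F : ℝ → ℝ be smooth, let φ : ℝ^{1+d} → ℝ be a smooth solution of □_η φ = F(φ), and let K(x) = A x + b be an affine η-Killing field (A η-antisymmetric). If the Lie derivative ψ := Kφ and its time derivative ∂_t ψ both vanish identically on the initial hypersurface {t = 0}, then ψ ≡ 0 on all of ℝ^{1+d}; that is, φ is invariant along K. (This is the paper's Theorem 3.1 — symmetries of initial data are preserved by hyperbolic evolution — instantiated for a scalar field on fixed flat Minkowski spacetime in the standard Cauchy problem.) -/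

import Mathlib

/-- Partial derivative of a scalar field on ℝ^{1+d} in the `a`-th coordinate direction
(index `0` is the time coordinate `t`). -/
noncomputable def pd {d : ℕ} (a : Fin (d + 1)) (u : (Fin (d + 1) → ℝ) → ℝ) :
    (Fin (d + 1) → ℝ) → ℝ :=
  fun x => fderiv ℝ u x (Pi.single a 1)

/-- The Minkowski d'Alembertian `□_η φ = −∂_t² φ + Δ_x φ` on ℝ^{1+d},
with `η = diag(−1, 1, …, 1)` and time coordinate indexed by `0`. -/
noncomputable def boxMink {d : ℕ} (u : (Fin (d + 1) → ℝ) → ℝ) :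
    (Fin (d + 1) → ℝ) → ℝ :=
  fun x => -(pd 0 (pd 0 u) x) + ∑ i : Fin d, pd i.succ (pd i.succ u) x

/-- The Minkowski bilinear form `η(v,w) = −v⁰w⁰ + Σ_i vⁱwⁱ` on ℝ^{1+d}. -/
noncomputable def minkForm {d : ℕ} (v w : Fin (d + 1) → ℝ) : ℝ :=
  -(v 0 * w 0) + ∑ i : Fin d, v i.succ * w i.succ

namespace ISP

abbrev Sm {d : ℕ} (u : (Fin (d + 1) → ℝ) → ℝ) : Prop := ContDiff ℝ (⊤ : ℕ∞) u

variable {d : ℕ}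

lemma Sm.da {u : (Fin (d + 1) → ℝ) → ℝ} (hu : Sm u) (x : Fin (d + 1) → ℝ) :
    DifferentiableAt ℝ u x := (hu.differentiable (by simp)) x

lemma sm_pd (a : Fin (d + 1)) {u : (Fin (d + 1) → ℝ) → ℝ} (hu : Sm u) : Sm (pd a u) := by
  unfold pd
  exact (hu.fderiv_right (m := (⊤ : ℕ∞)) (by simp)).clm_apply contDiff_const

lemma pd_mul (a : Fin (d + 1)) {u v : (Fin (d + 1) → ℝ) → ℝ} (hu : Sm u) (hv : Sm v)
    (x : Fin (d + 1) → ℝ) :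
    pd a (fun y => u y * v y) x = pd a u x * v x + u x * pd a v x := by
  unfold pd
  rw [fderiv_fun_mul (hu.da x) (hv.da x)]
  simp
  ring

lemma pd_add (a : Fin (d + 1)) {u v : (Fin (d + 1) → ℝ) → ℝ} (hu : Sm u) (hv : Sm v)
    (x : Fin (d + 1) → ℝ) :
    pd a (fun y => u y + v y) x = pd a u x + pd a v x := by
  unfold pd
  rw [fderiv_fun_add (hu.da x) (hv.da x)]
  simp

lemma pd_sub (a : Fin (d + 1)) {u v : (Fin (d + 1) → ℝ) → ℝ} (hu : Sm u) (hv : Sm v)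
    (x : Fin (d + 1) → ℝ) :
    pd a (fun y => u y - v y) x = pd a u x - pd a v x := by
  unfold pd
  rw [fderiv_fun_sub (hu.da x) (hv.da x)]
  simp

lemma pd_sum {ι : Type} (s : Finset ι) (a : Fin (d + 1)) {u : ι → (Fin (d + 1) → ℝ) → ℝ}
    (hu : ∀ i, Sm (u i)) (x : Fin (d + 1) → ℝ) :
    pd a (fun y => ∑ i ∈ s, u i y) x = ∑ i ∈ s, pd a (u i) x := by
  unfold pd
  rw [fderiv_fun_sum (fun i _ => (hu i).da x)]
  simp

lemma pd_const (a : Fin (d + 1)) (c : ℝ) (x : Fin (d + 1) → ℝ) :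
    pd a (fun _ => c) x = 0 := by
  unfold pd
  simp

lemma pd_coord (a b : Fin (d + 1)) (x : Fin (d + 1) → ℝ) :
    pd a (fun y => y b) x = if b = a then 1 else 0 := by
  unfold pd
  have : HasFDerivAt (fun y : Fin (d + 1) → ℝ => y b) (ContinuousLinearMap.proj b) x :=
    (ContinuousLinearMap.proj (R := ℝ) (φ := fun _ : Fin (d + 1) => ℝ) b).hasFDerivAt
  rw [this.fderiv]
  simp [Pi.single_apply]

lemma pd_comp (a : Fin (d + 1)) {u : (Fin (d + 1) → ℝ) → ℝ} (hu : Sm u) {G : ℝ → ℝ}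
    (hG : ContDiff ℝ (⊤ : ℕ∞) G) (x : Fin (d + 1) → ℝ) :
    pd a (fun y => G (u y)) x = deriv G (u x) * pd a u x := by
  unfold pd
  have h1 := ((hG.differentiable (by simp)) (u x)).hasDerivAt
  have h2 := h1.comp_hasFDerivAt x (hu.da x).hasFDerivAt
  have : fderiv ℝ (fun y => G (u y)) x = deriv G (u x) • fderiv ℝ u x := h2.fderiv
  rw [this]
  simp

lemma pd_comm (a b : Fin (d + 1)) {u : (Fin (d + 1) → ℝ) → ℝ} (hu : Sm u)
    (x : Fin (d + 1) → ℝ) : pd a (pd b u) x = pd b (pd a u) x := by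
  have hs : IsSymmSndFDerivAt ℝ u x :=
    (hu.contDiffAt (x := x)).isSymmSndFDerivAt (by
      rw [minSmoothness_of_isRCLikeNormedField]
      exact WithTop.coe_le_coe.2 (le_top : (2 : ℕ∞) ≤ ⊤))
  have hd : DifferentiableAt ℝ (fderiv ℝ u) x :=
    ((hu.fderiv_right (m := (⊤ : ℕ∞)) (by simp)).differentiable (by simp)) x
  have key : ∀ v w : Fin (d + 1) → ℝ,
      fderiv ℝ (fun y => fderiv ℝ u y v) x w = fderiv ℝ (fderiv ℝ u) x w v := by
    intro v w
    rw [fderiv_clm_apply hd (by fun_prop)]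
    simp
  unfold pd
  rw [key, key]
  exact hs _ _

/-- diagonal scaling -/
lemma pd_scale (a : Fin (d + 1)) {u : (Fin (d + 1) → ℝ) → ℝ} (hu : Sm u)
    (c : Fin (d + 1) → ℝ) (x : Fin (d + 1) → ℝ) :
    pd a (fun y => u (fun i => c i * y i)) x = c a * pd a u (fun i => c i * x i) := by
  unfold pd
  let L : (Fin (d + 1) → ℝ) →L[ℝ] (Fin (d + 1) → ℝ) :=
    ContinuousLinearMap.pi (fun i => c i • ContinuousLinearMap.proj i)
  have h2 : HasFDerivAt (fun y => u (L y)) ((fderiv ℝ u (L x)).comp L) x :=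
    HasFDerivAt.comp x (hu.da (L x)).hasFDerivAt L.hasFDerivAt
  have e : (fun y : Fin (d + 1) → ℝ => u (fun i => c i * y i)) = fun y => u (L y) := rfl
  have e2 : (fun i => c i * x i) = L x := rfl
  rw [e, h2.fderiv, e2]
  have e3 : L (Pi.single a 1) = c a • Pi.single a 1 := by
    ext i
    by_cases h : i = a
    · subst h; simp [L]
    · simp [L, h]
  simp [e3]

lemma pd_tangent (a : Fin (d + 1)) (ha : a ≠ 0) {u : (Fin (d + 1) → ℝ) → ℝ} (hu : Sm u)
    (h0 : ∀ x : Fin (d + 1) → ℝ, x 0 = 0 → u x = 0) (x : Fin (d + 1) → ℝ) (hx : x 0 = 0) :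
    pd a u x = 0 := by
  unfold pd
  have h := (hu.da x).lineDeriv_eq_fderiv (v := Pi.single a (1 : ℝ))
  rw [← h, lineDeriv]
  have : (fun t : ℝ => u (x + t • Pi.single a (1 : ℝ))) = fun _ => 0 := by
    funext t
    apply h0
    simp [hx, ha.symm]
  rw [this]
  simp

/-- metric signs -/
def ep (a : Fin (d + 1)) : ℝ := if a = 0 then -1 else 1

lemma box_eq (u : (Fin (d + 1) → ℝ) → ℝ) (x : Fin (d + 1) → ℝ) :
    boxMink u x = ∑ a, ep a * pd a (pd a u) x := by
  simp [boxMink, Fin.sum_univ_succ, ep]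

lemma mink_eq (v w : Fin (d + 1) → ℝ) :
    minkForm v w = ∑ a, ep a * (v a * w a) := by
  simp [minkForm, Fin.sum_univ_succ, ep]

lemma ep_sq (a : Fin (d + 1)) : ep a * ep a = 1 := by
  unfold ep; split_ifs <;> norm_num

lemma box_K (A : (Fin (d + 1) → ℝ) →ₗ[ℝ] (Fin (d + 1) → ℝ)) (b : Fin (d + 1) → ℝ)
    (hA : ∀ v w : Fin (d + 1) → ℝ, minkForm (A v) w + minkForm v (A w) = 0)
    (φ : (Fin (d + 1) → ℝ) → ℝ) (hφ : Sm φ) (x : Fin (d + 1) → ℝ) :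
    boxMink (fun x => ∑ a, (A x + b) a * pd a φ x) x
      = ∑ a, (A x + b) a * pd a (boxMink φ) x := by
  have hKs : ∀ a, Sm (fun x => (A x + b) a) := by
    intro a
    have : Sm (fun x => (LinearMap.toContinuousLinearMap A) x a + b a) := by
      have h := (LinearMap.toContinuousLinearMap A).contDiff (n := (⊤ : ℕ∞))
      have h2 := contDiff_pi.1 h a
      exact h2.add contDiff_const
    exact this
  have hKd : ∀ a c x, pd c (fun x => (A x + b) a) x = A (Pi.single c 1) a := by
    intro a c x
    unfold pd
    have h := (LinearMap.toContinuousLinearMap A).hasFDerivAt (x := x)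
    have h2 := (hasFDerivAt_pi'.1 h a).add_const (b a)
    have : fderiv ℝ (fun x => (A x + b) a) x = _ := h2.fderiv
    rw [this]
    simp
  have h1 : ∀ c, pd c (fun x => ∑ a, (A x + b) a * pd a φ x) = fun x =>
      ∑ a, (A (Pi.single c 1) a * pd a φ x + (A x + b) a * pd c (pd a φ) x) := by
    intro c
    funext x
    rw [pd_sum _ _ (fun a => (hKs a).mul (sm_pd a hφ))]
    refine Finset.sum_congr rfl fun a _ => ?_
    rw [pd_mul c (hKs a) (sm_pd a hφ), hKd]
  have h2 : ∀ c, pd c (pd c (fun x => ∑ a, (A x + b) a * pd a φ x)) x =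
      ∑ a, (2 * (A (Pi.single c 1) a * pd c (pd a φ) x)
        + (A x + b) a * pd a (pd c (pd c φ)) x) := by
    intro c
    rw [h1 c, pd_sum _ _ (fun a => (contDiff_const.mul (sm_pd a hφ)).add
      ((hKs a).mul (sm_pd c (sm_pd a hφ))))]
    refine Finset.sum_congr rfl fun a _ => ?_
    rw [pd_add c (contDiff_const.mul (sm_pd a hφ)) ((hKs a).mul (sm_pd c (sm_pd a hφ))),
      pd_mul c contDiff_const (sm_pd a hφ), pd_mul c (hKs a) (sm_pd c (sm_pd a hφ)), hKd, pd_const]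
    have : pd c (pd c (pd a φ)) x = pd a (pd c (pd c φ)) x := by
      have e : pd c (pd a φ) = pd a (pd c φ) := funext fun y => pd_comm c a hφ y
      rw [e, pd_comm c a (sm_pd c hφ)]
    rw [this]; ring
  have h3 : ∀ a, pd a (boxMink φ) x = ∑ c, ep c * pd a (pd c (pd c φ)) x := by
    intro a
    have e : boxMink φ = fun x => ∑ c, ep c * pd c (pd c φ) x := funext (box_eq φ)
    rw [e, pd_sum _ _ (fun c => contDiff_const.mul (sm_pd c (sm_pd c hφ)))]
    refine Finset.sum_congr rfl fun c _ => ?_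
    rw [pd_mul a contDiff_const (sm_pd c (sm_pd c hφ)), pd_const]; ring
  have hanti : ∀ a c, ep a * A (Pi.single a 1) c + ep c * A (Pi.single c 1) a = 0 := by
    intro a c
    have := hA (Pi.single a 1) (Pi.single c 1)
    rw [mink_eq, mink_eq] at this
    simp [Pi.single_apply] at this
    linear_combination ep a * ep c * this - (ep a * A (Pi.single a 1) c) * ep_sq c
      - (ep c * A (Pi.single c 1) a) * ep_sq a
  have hz : ∑ c, ∑ a, ep c * (A (Pi.single c 1) a * pd c (pd a φ) x) = 0 := by
    have e1 : ∑ c, ∑ a, ep c * (A (Pi.single c 1) a * pd c (pd a φ) x)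
        = - ∑ c, ∑ a, ep c * (A (Pi.single c 1) a * pd c (pd a φ) x) := by
      conv_lhs => rw [Finset.sum_comm]
      rw [← Finset.sum_neg_distrib]
      refine Finset.sum_congr rfl fun a _ => ?_
      rw [← Finset.sum_neg_distrib]
      refine Finset.sum_congr rfl fun c _ => ?_
      rw [pd_comm c a hφ]
      linear_combination pd a (pd c φ) x * hanti a c
    linarith
  rw [box_eq]
  simp only [h2, h3, Finset.mul_sum, mul_add, Finset.sum_add_distrib]
  have e2 : ∑ c, ∑ a, ep c * (2 * (A (Pi.single c 1) a * pd c (pd a φ) x)) = 0 := by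
    rw [← mul_zero (2 : ℝ), ← hz, Finset.mul_sum]
    refine Finset.sum_congr rfl fun a _ => ?_
    rw [Finset.mul_sum]
    refine Finset.sum_congr rfl fun c _ => ?_
    ring
  rw [e2, zero_add, Finset.sum_comm]
  refine Finset.sum_congr rfl fun a _ => Finset.sum_congr rfl fun c _ => ?_
  ring

/-- Lagrangian density -/
noncomputable def Lag (ψ : (Fin (d + 1) → ℝ) → ℝ) (x : Fin (d + 1) → ℝ) : ℝ :=
  1 / 2 * ((∑ b, ep b * (pd b ψ x * pd b ψ x)) + ψ x * ψ x)

/-- energy density -/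
noncomputable def Een (ψ : (Fin (d + 1) → ℝ) → ℝ) (x : Fin (d + 1) → ℝ) : ℝ :=
  1 / 2 * (pd 0 ψ x * pd 0 ψ x + (∑ i : Fin d, pd i.succ ψ x * pd i.succ ψ x) + ψ x * ψ x)

/-- current -/
noncomputable def Wc (g ψ : (Fin (d + 1) → ℝ) → ℝ) (a : Fin (d + 1))
    (x : Fin (d + 1) → ℝ) : ℝ :=
  ep a * (g x * (pd 0 ψ x * pd a ψ x)) - (if a = 0 then 1 else 0) * (g x * Lag ψ x)

lemma sm_Lag {ψ : (Fin (d + 1) → ℝ) → ℝ} (h : Sm ψ) : Sm (Lag ψ) := by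
  unfold Lag
  exact contDiff_const.mul ((ContDiff.sum fun b _ =>
    contDiff_const.mul ((sm_pd b h).mul (sm_pd b h))).add (h.mul h))

lemma sm_Wc {g ψ : (Fin (d + 1) → ℝ) → ℝ} (hg : Sm g) (h : Sm ψ) (a : Fin (d + 1)) :
    Sm (Wc g ψ a) := by
  unfold Wc
  exact (contDiff_const.mul (hg.mul ((sm_pd 0 h).mul (sm_pd a h)))).sub
    (contDiff_const.mul (hg.mul (sm_Lag h)))

lemma pd_Lag {ψ : (Fin (d + 1) → ℝ) → ℝ} (h : Sm ψ) (x : Fin (d + 1) → ℝ) :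
    pd 0 (Lag ψ) x = (∑ b, ep b * (pd b ψ x * pd b (pd 0 ψ) x)) + ψ x * pd 0 ψ x := by
  have h1 : ∀ b, Sm (fun x => ep b * (pd b ψ x * pd b ψ x)) := fun b =>
    contDiff_const.mul ((sm_pd b h).mul (sm_pd b h))
  have h2 : Sm (fun x => ∑ b, ep b * (pd b ψ x * pd b ψ x)) := ContDiff.sum fun b _ => h1 b
  have e : Lag ψ = fun x => 1 / 2 * ((∑ b, ep b * (pd b ψ x * pd b ψ x)) + ψ x * ψ x) := rfl
  rw [e, pd_mul 0 contDiff_const (h2.add (h.mul h)), pd_const, pd_add 0 h2 (h.mul h),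
    pd_sum _ _ h1, pd_mul 0 h h]
  have : ∀ b, pd 0 (fun x => ep b * (pd b ψ x * pd b ψ x)) x
      = 2 * (ep b * (pd b ψ x * pd b (pd 0 ψ) x)) := by
    intro b
    rw [pd_mul 0 contDiff_const ((sm_pd b h).mul (sm_pd b h)), pd_const,
      pd_mul 0 (sm_pd b h) (sm_pd b h), pd_comm 0 b h]
    ring
  simp only [this, ← Finset.mul_sum]
  ring

lemma div_Wc {g ψ : (Fin (d + 1) → ℝ) → ℝ} (hg : Sm g) (h : Sm ψ)
    (V : (Fin (d + 1) → ℝ) → ℝ) (hw : ∀ x, boxMink ψ x = V x * ψ x) (x : Fin (d + 1) → ℝ) :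
    ∑ a, pd a (Wc g ψ a) x = pd 0 ψ x * (∑ i : Fin d, pd i.succ g x * pd i.succ ψ x)
      - pd 0 g x * Een ψ x + g x * (V x - 1) * (ψ x * pd 0 ψ x) := by
  have hp := fun a => sm_pd a h
  have h1 : ∀ a, pd a (Wc g ψ a) x = (ep a * (pd a g x * pd a ψ x)) * pd 0 ψ x
      + g x * (ep a * (pd a ψ x * pd a (pd 0 ψ) x))
      + (g x * pd 0 ψ x) * (ep a * pd a (pd a ψ) x)
      - (if a = 0 then pd 0 g x * Lag ψ x + g x * pd 0 (Lag ψ) x else 0) := by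
    intro a
    have e : Wc g ψ a = fun x => ep a * (g x * (pd 0 ψ x * pd a ψ x))
      - (if a = 0 then 1 else 0) * (g x * Lag ψ x) := rfl
    rw [e, pd_sub a (contDiff_const.mul (hg.mul ((hp 0).mul (hp a))))
      (contDiff_const.mul (hg.mul (sm_Lag h))), pd_mul a contDiff_const (hg.mul ((hp 0).mul (hp a))),
      pd_mul a contDiff_const (hg.mul (sm_Lag h)), pd_const, pd_const,
      pd_mul a hg ((hp 0).mul (hp a)), pd_mul a (hp 0) (hp a), pd_mul a hg (sm_Lag h)]
    split_ifs with h0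
    · subst h0; ring
    · ring
  simp only [h1, Finset.sum_add_distrib, Finset.sum_sub_distrib, ← Finset.mul_sum,
    ← Finset.sum_mul]
  rw [← box_eq, hw, pd_Lag h]
  simp only [Finset.sum_ite_eq', Finset.mem_univ, if_true, Een, Lag]
  have k1 : ∑ i, ep i * (pd i g x * pd i ψ x) = - (pd 0 g x * pd 0 ψ x)
      + ∑ i : Fin d, pd i.succ g x * pd i.succ ψ x := by
    simp [Fin.sum_univ_succ, ep]
  have k2 : ∑ i, ep i * (pd i ψ x * pd i ψ x) = - (pd 0 ψ x * pd 0 ψ x)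
      + ∑ i : Fin d, pd i.succ ψ x * pd i.succ ψ x := by
    simp [Fin.sum_univ_succ, ep]
  rw [k1, k2]
  ring

lemma Wc_zero (g ψ : (Fin (d + 1) → ℝ) → ℝ) (x : Fin (d + 1) → ℝ) :
    Wc g ψ 0 x = - (g x * Een ψ x) := by
  have k2 : ∑ i, ep i * (pd i ψ x * pd i ψ x) = - (pd 0 ψ x * pd 0 ψ x)
      + ∑ i : Fin d, pd i.succ ψ x * pd i.succ ψ x := by
    simp [Fin.sum_univ_succ, ep]
  simp only [Wc, Lag, Een, k2]
  simp [ep]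
  ring

lemma Wc_of_g (g ψ : (Fin (d + 1) → ℝ) → ℝ) (a : Fin (d + 1)) (x : Fin (d + 1) → ℝ)
    (hx : g x = 0) : Wc g ψ a x = 0 := by
  simp [Wc, hx]

/-- cone function -/
def qf (T : ℝ) (z x : Fin (d + 1) → ℝ) : ℝ :=
  (T - x 0) * (T - x 0) - ∑ i : Fin d, (x i.succ - z i.succ) * (x i.succ - z i.succ)

/-- weight -/
noncomputable def gf (l T : ℝ) (z x : Fin (d + 1) → ℝ) : ℝ :=
  Real.exp (-l * x 0) * expNegInvGlue (qf T z x)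

lemma sm_coord (a : Fin (d + 1)) : Sm (fun x : Fin (d + 1) → ℝ => x a) := contDiff_apply ℝ ℝ a

lemma sm_qf (T : ℝ) (z : Fin (d + 1) → ℝ) : Sm (qf T z) := by
  unfold qf
  have h0 : Sm (fun x : Fin (d + 1) → ℝ => T - x 0) := contDiff_const.sub (sm_coord 0)
  have hi : ∀ i : Fin d, Sm (fun x : Fin (d + 1) → ℝ => x i.succ - z i.succ) :=
    fun i => (sm_coord _).sub contDiff_const
  exact (h0.mul h0).sub (ContDiff.sum fun i _ => (hi i).mul (hi i))

lemma pd_qf (T : ℝ) (z : Fin (d + 1) → ℝ) (a : Fin (d + 1)) (x : Fin (d + 1) → ℝ) :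
    pd a (qf T z) x = (if a = 0 then -2 * (T - x 0) else -2 * (x a - z a)) := by
  have h0 : Sm (fun x : Fin (d + 1) → ℝ => T - x 0) := contDiff_const.sub (sm_coord 0)
  have hi : ∀ i : Fin d, Sm (fun x : Fin (d + 1) → ℝ => x i.succ - z i.succ) :=
    fun i => (sm_coord _).sub contDiff_const
  have e : qf T z = fun x => (T - x 0) * (T - x 0)
    - ∑ i : Fin d, (x i.succ - z i.succ) * (x i.succ - z i.succ) := rfl
  rw [e, pd_sub a (h0.mul h0) (ContDiff.sum fun i _ => (hi i).mul (hi i)), pd_mul a h0 h0,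
    pd_sum _ _ (fun i => (hi i).mul (hi i)), pd_sub a contDiff_const (sm_coord 0), pd_const,
    pd_coord]
  have : ∀ i : Fin d, pd a (fun x => (x i.succ - z i.succ) * (x i.succ - z i.succ)) x
      = if i.succ = a then 2 * (x a - z a) else 0 := by
    intro i
    rw [pd_mul a (hi i) (hi i), pd_sub a (sm_coord _) contDiff_const, pd_const, pd_coord]
    split_ifs with h
    · subst h; ring
    · ring
  simp only [this]
  refine Fin.cases ?_ (fun j => ?_) a
  · simp [Fin.succ_ne_zero]; ring
  · simp [Fin.succ_ne_zero, (Fin.succ_ne_zero _).symm]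

lemma sm_exp (l : ℝ) : Sm (fun x : Fin (d + 1) → ℝ => Real.exp (-l * x 0)) :=
  Real.contDiff_exp.comp (contDiff_const.mul (sm_coord 0))

lemma sm_hq (T : ℝ) (z : Fin (d + 1) → ℝ) : Sm (fun x => expNegInvGlue (qf T z x)) :=
  expNegInvGlue.contDiff.comp (sm_qf T z)

lemma sm_gf (l T : ℝ) (z : Fin (d + 1) → ℝ) : Sm (gf l T z) := (sm_exp l).mul (sm_hq T z)

lemma pd_gf (l T : ℝ) (z : Fin (d + 1) → ℝ) (a : Fin (d + 1)) (x : Fin (d + 1) → ℝ) :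
    pd a (gf l T z) x = (if a = 0 then -l * gf l T z x else 0)
      + Real.exp (-l * x 0) * deriv expNegInvGlue (qf T z x) *
        (if a = 0 then -2 * (T - x 0) else -2 * (x a - z a)) := by
  have e : gf l T z = fun x => Real.exp (-l * x 0) * expNegInvGlue (qf T z x) := rfl
  rw [e, pd_mul a (sm_exp l) (sm_hq T z), pd_comp a (sm_qf T z) expNegInvGlue.contDiff,
    pd_comp (G := Real.exp) a (contDiff_const.mul (sm_coord 0)) Real.contDiff_exp, pd_qf,
    pd_mul a contDiff_const (sm_coord 0), pd_const, pd_coord, Real.deriv_exp]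
  by_cases h : a = 0
  · subst h; simp; ring
  · simp [h, Ne.symm h]; ring

lemma dh_zero {s : ℝ} (hs : s ≤ 0) : deriv expNegInvGlue s = 0 := by
  apply IsLocalMin.deriv_eq_zero
  refine Filter.Eventually.of_forall fun y => ?_
  rw [expNegInvGlue.zero_of_nonpos hs]
  exact expNegInvGlue.nonneg y

lemma cone_ineq {s p : ℝ} (hs : 0 ≤ s) (y r : Fin d → ℝ) (hq : 0 < s * s - ∑ i, y i * y i) :
    0 ≤ s * (p * p + ∑ i, r i * r i) - 2 * (p * ∑ i, y i * r i) := by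
  have hspos : 0 < s := by
    rcases hs.eq_or_lt with h | h
    · subst h
      have : 0 ≤ ∑ i, y i * y i := Finset.sum_nonneg fun i _ => mul_self_nonneg _
      linarith
    · exact h
  have h1 : 0 ≤ ∑ i, (s * r i - p * y i) * (s * r i - p * y i) :=
    Finset.sum_nonneg fun i _ => mul_self_nonneg _
  have h2 : ∑ i, (s * r i - p * y i) * (s * r i - p * y i)
      = s * s * ∑ i, r i * r i - 2 * s * p * (∑ i, y i * r i) + p * p * ∑ i, y i * y i := by
    simp only [Finset.mul_sum, ← Finset.sum_add_distrib, ← Finset.sum_sub_distrib]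
    exact Finset.sum_congr rfl fun i _ => by ring
  have h3 : 0 ≤ s * (s * (p * p + ∑ i, r i * r i) - 2 * (p * ∑ i, y i * r i)) := by
    have := mul_nonneg (mul_self_nonneg p) hq.le
    nlinarith
  exact nonneg_of_mul_nonneg_right h3 hspos

lemma Een_nonneg (ψ : (Fin (d + 1) → ℝ) → ℝ) (x : Fin (d + 1) → ℝ) : 0 ≤ Een ψ x := by
  have : 0 ≤ ∑ i : Fin d, pd i.succ ψ x * pd i.succ ψ x :=
    Finset.sum_nonneg fun i _ => mul_self_nonneg _
  unfold Een
  nlinarith [mul_self_nonneg (pd 0 ψ x), mul_self_nonneg (ψ x)]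

lemma gf_nonneg (l T : ℝ) (z x : Fin (d + 1) → ℝ) : 0 ≤ gf l T z x :=
  mul_nonneg (Real.exp_pos _).le (expNegInvGlue.nonneg _)

lemma div_lower {ψ : (Fin (d + 1) → ℝ) → ℝ} (h : Sm ψ)
    (V : (Fin (d + 1) → ℝ) → ℝ) (hw : ∀ x, boxMink ψ x = V x * ψ x)
    (C T : ℝ) (z x : Fin (d + 1) → ℝ) (hC : |V x - 1| ≤ C) (hx : x 0 ≤ T) :
    gf (C + 1) T z x * Een ψ x ≤ ∑ a, pd a (Wc (gf (C + 1) T z) ψ a) x := by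
  rw [div_Wc (sm_gf _ _ _) h V hw]
  simp only [pd_gf, Fin.succ_ne_zero, if_true, if_false, zero_add]
  set g := gf (C + 1) T z x with hg
  have hg0 : 0 ≤ g := gf_nonneg _ _ _ _
  set E := Real.exp (-(C + 1) * x 0) * deriv expNegInvGlue (qf T z x) with hE
  have hE0 : 0 ≤ E := mul_nonneg (Real.exp_pos _).le expNegInvGlue.monotone.deriv_nonneg
  have hEn := Een_nonneg ψ x
  have k1 : ∑ i : Fin d, E * (-2 * (x i.succ - z i.succ)) * pd i.succ ψ x
      = -2 * E * ∑ i : Fin d, (x i.succ - z i.succ) * pd i.succ ψ x := by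
    rw [Finset.mul_sum]
    exact Finset.sum_congr rfl fun i _ => by ring
  rw [k1]
  have hS : 0 ≤ ∑ i : Fin d, pd i.succ ψ x * pd i.succ ψ x :=
    Finset.sum_nonneg fun i _ => mul_self_nonneg _
  have k2 : 0 ≤ E * (2 * (T - x 0) * Een ψ x
      - 2 * (pd 0 ψ x * ∑ i : Fin d, (x i.succ - z i.succ) * pd i.succ ψ x)) := by
    rcases le_or_gt (qf T z x) 0 with hq | hq
    · have : E = 0 := by rw [hE, dh_zero hq, mul_zero]
      rw [this, zero_mul]
    · apply mul_nonneg hE0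
      have := cone_ineq (p := pd 0 ψ x) (sub_nonneg.2 hx) (fun i : Fin d => x i.succ - z i.succ)
        (fun i => pd i.succ ψ x) hq
      have h2 := mul_nonneg (sub_nonneg.2 hx) (mul_self_nonneg (ψ x))
      simp only [Een]
      linarith
  have k3 : |(V x - 1) * (ψ x * pd 0 ψ x)| ≤ C * Een ψ x := by
    rw [abs_mul]
    refine mul_le_mul hC ?_ (abs_nonneg _) ((abs_nonneg _).trans hC)
    unfold Een
    rw [abs_le]
    constructor <;>
      nlinarith [mul_self_nonneg (ψ x + pd 0 ψ x), mul_self_nonneg (ψ x - pd 0 ψ x)]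
  have k4 : 0 ≤ g * (C * Een ψ x + (V x - 1) * (ψ x * pd 0 ψ x)) :=
    mul_nonneg hg0 (by linarith [(abs_le.1 k3).1])
  linarith

lemma uniq_nonneg {ψ : (Fin (d + 1) → ℝ) → ℝ} (h : Sm ψ)
    (V : (Fin (d + 1) → ℝ) → ℝ) (hV : Continuous V) (hw : ∀ x, boxMink ψ x = V x * ψ x)
    (h0 : ∀ x : Fin (d + 1) → ℝ, x 0 = 0 → ψ x = 0)
    (h1 : ∀ x : Fin (d + 1) → ℝ, x 0 = 0 → pd 0 ψ x = 0)
    (z : Fin (d + 1) → ℝ) (hz : 0 ≤ z 0) : ψ z = 0 := by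
  rcases hz.eq_or_lt with hz0 | hzpos
  · exact h0 z hz0.symm
  set T : ℝ := z 0 + 1 with hT
  let A : Fin (d + 1) → ℝ := Fin.cons 0 (fun i => z i.succ - T)
  let B : Fin (d + 1) → ℝ := Fin.cons T (fun i => z i.succ + T)
  have hAB : A ≤ B := by
    intro i
    refine Fin.cases ?_ (fun j => ?_) i
    · simp [A, B]; linarith
    · simp [A, B]; linarith
  obtain ⟨C, hC⟩ : ∃ C, ∀ x ∈ Set.Icc A B, |V x - 1| ≤ C := by
    obtain ⟨C, hC⟩ := (isCompact_Icc (a := A) (b := B)).exists_bound_of_continuousOn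
      (f := fun x => V x - 1) (by fun_prop)
    exact ⟨C, hC⟩
  set g := gf (C + 1) T z with hg
  have hgs : Sm g := sm_gf _ _ _
  have hWs := fun a => sm_Wc hgs h a
  have hcont : Continuous (fun x => ∑ a, pd a (Wc g ψ a) x) :=
    continuous_finset_sum _ fun a _ => (sm_pd a (hWs a)).continuous
  have hint : MeasureTheory.IntegrableOn (fun x => ∑ a, pd a (Wc g ψ a) x) (Set.Icc A B) :=
    hcont.continuousOn.integrableOn_compact isCompact_Icc
  have hdiv := MeasureTheory.integral_divergence_of_hasFDerivAt_off_countable' A B hAB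
    (Wc g ψ) (fun a x => fderiv ℝ (Wc g ψ a) x) ∅ Set.countable_empty
    (fun a => (hWs a).continuous.continuousOn)
    (fun x _ a => ((hWs a).da x).hasFDerivAt) hint
  have htop : ∀ x : Fin (d + 1) → ℝ, x 0 = T → g x = 0 := by
    intro x hx
    rw [hg, gf, expNegInvGlue.zero_of_nonpos, mul_zero]
    rw [qf, hx]
    have : 0 ≤ ∑ i : Fin d, (x i.succ - z i.succ) * (x i.succ - z i.succ) :=
      Finset.sum_nonneg fun i _ => mul_self_nonneg _
    linarith
  have hside : ∀ (j : Fin d) (x : Fin (d + 1) → ℝ), 0 ≤ x 0 → x 0 ≤ T →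
      (x j.succ - z j.succ) * (x j.succ - z j.succ) = T * T → g x = 0 := by
    intro j x hx0 hxT hj
    rw [hg, gf, expNegInvGlue.zero_of_nonpos, mul_zero]
    rw [qf]
    have : (x j.succ - z j.succ) * (x j.succ - z j.succ)
        ≤ ∑ i : Fin d, (x i.succ - z i.succ) * (x i.succ - z i.succ) :=
      Finset.single_le_sum (f := fun i : Fin d => (x i.succ - z i.succ) * (x i.succ - z i.succ))
        (fun i _ => mul_self_nonneg _) (Finset.mem_univ j)
    nlinarith
  have hbot : ∀ x : Fin (d + 1) → ℝ, x 0 = 0 → Een ψ x = 0 := by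
    intro x hx
    simp [Een, h0 x hx, h1 x hx, fun i : Fin d => pd_tangent i.succ (Fin.succ_ne_zero i) h h0 x hx]
  have hface : ∀ (j : Fin d) (c : ℝ) (hc : (c - z j.succ) * (c - z j.succ) = T * T),
      (∫ y in Set.Icc (A ∘ j.succ.succAbove) (B ∘ j.succ.succAbove),
        Wc g ψ j.succ (j.succ.insertNth c y)) = 0 := by
    intro j c hc
    apply MeasureTheory.setIntegral_eq_zero_of_forall_eq_zero
    intro y hy
    apply Wc_of_g
    have hex : ∃ k, j.succ.succAbove k = 0 :=
      Fin.exists_succAbove_eq (Fin.succ_ne_zero j).symm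
    obtain ⟨k, hk⟩ := hex
    have e0 : (j.succ.insertNth c y : Fin (d + 1) → ℝ) 0 = y k := by
      rw [← hk, Fin.insertNth_apply_succAbove]
    have hl := hy.1 k
    have hu := hy.2 k
    simp only [Function.comp, hk] at hl hu
    refine hside j _ ?_ ?_ ?_
    · rw [e0]; exact hl
    · rw [e0]; exact hu
    · rw [Fin.insertNth_apply_same]; exact hc
  have hzero : ∫ x in Set.Icc A B, ∑ a, pd a (Wc g ψ a) x = 0 := by
    refine Eq.trans hdiv ?_
    apply Finset.sum_eq_zero
    intro a _
    refine Fin.cases ?_ (fun j => ?_) a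
    · rw [MeasureTheory.setIntegral_eq_zero_of_forall_eq_zero,
        MeasureTheory.setIntegral_eq_zero_of_forall_eq_zero, sub_zero]
      · intro y _
        rw [Wc_zero, hbot _ (by rw [Fin.insertNth_apply_same]; rfl), mul_zero, neg_zero]
      · intro y _
        exact Wc_of_g _ _ _ _ (htop _ (by rw [Fin.insertNth_apply_same]; rfl))
    · rw [hface j (B j.succ) (by simp [B]), hface j (A j.succ) (by simp [A]), sub_zero]
  have hlow : ∀ x ∈ Set.Icc A B, g x * Een ψ x ≤ ∑ a, pd a (Wc g ψ a) x := by
    intro x hx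
    exact div_lower h V hw C T z x (hC x hx) (hx.2 0)
  have hnn : 0 ≤ᵐ[MeasureTheory.volume.restrict (Set.Icc A B)]
      (fun x => ∑ a, pd a (Wc g ψ a) x) := by
    refine (MeasureTheory.ae_restrict_iff' measurableSet_Icc).2 (Filter.Eventually.of_forall ?_)
    intro x hx
    exact (mul_nonneg (gf_nonneg _ _ _ _) (Een_nonneg _ _)).trans (hlow x hx)
  have hae := (MeasureTheory.setIntegral_eq_zero_iff_of_nonneg_ae hnn hint).1 hzero
  let U : Set (Fin (d + 1) → ℝ) := Set.pi Set.univ fun i => Set.Ioo (A i) (B i)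
  have hU : IsOpen U := isOpen_set_pi Set.finite_univ fun i _ => isOpen_Ioo
  have hUI : U ⊆ Set.Icc A B := fun x hx =>
    ⟨fun i => (hx i trivial).1.le, fun i => (hx i trivial).2.le⟩
  have hEq := MeasureTheory.Measure.eqOn_open_of_ae_eq
    (MeasureTheory.ae_restrict_of_ae_restrict_of_subset hUI hae) hU hcont.continuousOn
    continuousOn_const
  have hzU : z ∈ U := by
    intro i _
    refine Fin.cases ?_ (fun j => ?_) i
    · simp [A, B, hzpos, hT]
    · simp [A, B, hT]; linarith
  have hz1 := hEq hzU
  have hz2 := hlow z (hUI hzU)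
  simp only [Pi.zero_apply] at hz1
  rw [hz1] at hz2
  have hgz : 0 < g z := by
    apply mul_pos (Real.exp_pos _)
    apply expNegInvGlue.pos_of_pos
    simp [qf, hT]
  have hE : Een ψ z ≤ 0 := by
    by_contra hcon
    push Not at hcon
    exact absurd (mul_pos hgz hcon) (not_lt.2 hz2)
  have hS : 0 ≤ ∑ i : Fin d, pd i.succ ψ z * pd i.succ ψ z :=
    Finset.sum_nonneg fun i _ => mul_self_nonneg _
  unfold Een at hE
  have : ψ z * ψ z = 0 :=
    le_antisymm (by nlinarith [mul_self_nonneg (pd 0 ψ z)]) (mul_self_nonneg _)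
  exact mul_self_eq_zero.1 this

lemma uniq {ψ : (Fin (d + 1) → ℝ) → ℝ} (h : Sm ψ)
    (V : (Fin (d + 1) → ℝ) → ℝ) (hV : Continuous V) (hw : ∀ x, boxMink ψ x = V x * ψ x)
    (h0 : ∀ x : Fin (d + 1) → ℝ, x 0 = 0 → ψ x = 0)
    (h1 : ∀ x : Fin (d + 1) → ℝ, x 0 = 0 → pd 0 ψ x = 0)
    (z : Fin (d + 1) → ℝ) : ψ z = 0 := by
  rcases le_total 0 (z 0) with hz | hz
  · exact uniq_nonneg h V hV hw h0 h1 z hz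
  have hRs : ContDiff ℝ (⊤ : ℕ∞) (fun (y : Fin (d + 1) → ℝ) (i : Fin (d + 1)) => ep i * y i) :=
    contDiff_pi.2 fun i => contDiff_const.mul (sm_coord i)
  have hs : Sm (fun y => ψ (fun i => ep i * y i)) := h.comp hRs
  have hp : ∀ a, pd a (fun y => ψ (fun i => ep i * y i))
      = fun y => ep a * pd a ψ (fun i => ep i * y i) :=
    fun a => funext fun y => pd_scale a h ep y
  have hep0 : ep (0 : Fin (d + 1)) = -1 := by simp [ep]
  have hh := uniq_nonneg hs (fun y => V (fun i => ep i * y i)) (hV.comp hRs.continuous)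
    (by
      intro x
      rw [box_eq]
      have : ∀ a, pd a (pd a (fun y => ψ (fun i => ep i * y i))) x
          = pd a (pd a ψ) (fun i => ep i * x i) := by
        intro a
        have hs2 : Sm (fun y => pd a ψ (fun i => ep i * y i)) := (sm_pd a h).comp hRs
        rw [hp a, pd_mul a contDiff_const hs2, pd_const, pd_scale a (sm_pd a h)]
        linear_combination pd a (pd a ψ) (fun i => ep i * x i) * ep_sq a
      simp only [this]
      rw [← box_eq, hw])
    (fun x hx => h0 _ (by simp [hx]))
    (fun x hx => by rw [hp]; simp only []; rw [h1 _ (by simp [hx]), mul_zero])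
    (fun i => ep i * z i) (by simp only [hep0]; linarith)
  have e : (fun i => ep i * (ep i * z i)) = z := by
    funext i
    rw [← mul_assoc, ep_sq, one_mul]
  simpa only [e] using hh

end ISP

/-- Symmetries of initial data are preserved by hyperbolic evolution: if `□_η φ = F(φ)`
on Minkowski space, `K = A x + b` is an affine η-Killing field, and the Lie derivative
`ψ = Kφ` together with `∂_t ψ` vanishes on the initial hypersurface `{t = 0}`, then
`ψ ≡ 0`, i.e. `φ` is invariant along `K`. -/
theorem initial_symmetry_preserved {d : ℕ} (hd : 1 ≤ d)
    (A : (Fin (d + 1) → ℝ) →ₗ[ℝ] (Fin (d + 1) → ℝ)) (b : Fin (d + 1) → ℝ)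
    (hA : ∀ v w : Fin (d + 1) → ℝ, minkForm (A v) w + minkForm v (A w) = 0)
    (K : (Fin (d + 1) → ℝ) → (Fin (d + 1) → ℝ)) (hKdef : ∀ x, K x = A x + b)
    (F : ℝ → ℝ) (hF : ContDiff ℝ (⊤ : ℕ∞) F)
    (φ : (Fin (d + 1) → ℝ) → ℝ) (hφ : ContDiff ℝ (⊤ : ℕ∞) φ)
    (hwave : ∀ x, boxMink φ x = F (φ x))
    (ψ : (Fin (d + 1) → ℝ) → ℝ) (hψdef : ∀ x, ψ x = ∑ a, K x a * pd a φ x)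
    (hinit : ∀ x : Fin (d + 1) → ℝ, x 0 = 0 → ψ x = 0)
    (hinit' : ∀ x : Fin (d + 1) → ℝ, x 0 = 0 → pd 0 ψ x = 0) :
    ∀ x, ψ x = 0 := by
  have hK : K = fun x => A x + b := funext hKdef
  subst hK
  have hψ : ψ = fun x => ∑ a, (A x + b) a * pd a φ x := funext hψdef
  have hKs : ContDiff ℝ (⊤ : ℕ∞) (fun x => A x + b) :=
    (LinearMap.toContinuousLinearMap A).contDiff.add contDiff_const
  have hψs : ISP.Sm ψ := by
    rw [hψ]
    exact ContDiff.sum fun a _ => (contDiff_pi.1 hKs a).mul (ISP.sm_pd a hφ)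
  have hV : Continuous (fun x => deriv F (φ x)) :=
    (hF.continuous_deriv (by simp)).comp hφ.continuous
  refine ISP.uniq hψs (fun x => deriv F (φ x)) hV ?_ hinit hinit'
  intro x
  have hb : boxMink φ = fun x => F (φ x) := funext hwave
  rw [hψ, ISP.box_K A b hA φ hφ, hb, Finset.mul_sum]
  refine Finset.sum_congr rfl fun a _ => ?_
  rw [ISP.pd_comp a hφ hF]
  ring
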